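/- For all 1 ≤ i ≠ j ≤ n and 1 ≤ k ≠ l ≤ n, the following identities of operators on L hold: e_{ij}e_{kl} − e_{il}e_{kj} = e_{il}S^τ_{jk} − e_{ij}S^τ_{lk}, and e_{ij}e_{kl} − e_{kj}e_{il} = S^τ_{jk}e_{il} − S^τ_{ji}e_{kl}. -/

import Mathlib

noncomputable section

/-- The Laurent polynomial ring `R[X₁^{±1}, …, Xₙ^{±1}]` in `n` variables over `R`,
realised as the monoid algebra of the additive monoid `Fin n →₀ ℤ` of exponent vectors. -/
abbrev Laur (R : Type*) [CommRing R] (n : ℕ) : Type _ :=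
  AddMonoidAlgebra R (Fin n →₀ ℤ)

variable {R : Type*} [CommRing R] {n : ℕ}

/-- The monomial `c · X^a`. -/
def mono (a : Fin n →₀ ℤ) (c : R) : Laur R n := AddMonoidAlgebra.single a c

/-- The generator `X_i`. -/
def Xel (i : Fin n) : Laur R n := mono (Finsupp.single i 1) 1

/-- The element `X_i⁻¹`. -/
def XinvEl (i : Fin n) : Laur R n := mono (Finsupp.single i (-1)) 1

/-- Multiplication by a Laurent polynomial, as a linear endomorphism. -/
def mulOp (x : Laur R n) : Module.End R (Laur R n) := LinearMap.mulLeft R x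

/-- The operator of multiplication by `X_i`, with `ℕ`-indexing (`0`-based; junk value `1`
out of range). -/
def XOp (i : ℕ) : Module.End R (Laur R n) :=
  if h : i < n then mulOp (Xel ⟨i, h⟩) else 1

/-- The operator of multiplication by `X_i⁻¹`, with `ℕ`-indexing. -/
def XinvOp (i : ℕ) : Module.End R (Laur R n) :=
  if h : i < n then mulOp (XinvEl ⟨i, h⟩) else 1

/-- Ascending product `f s * f (s+1) * ⋯ * f (s+len-1)` (equal to `1` when `len = 0`). -/
def aF {M : Type*} [Monoid M] (f : ℕ → M) (s len : ℕ) : M :=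
  ((List.range' s len).map f).prod

/-- Descending product `f (s+len-1) * ⋯ * f (s+1) * f s` (equal to `1` when `len = 0`). -/
def dF {M : Type*} [Monoid M] (f : ℕ → M) (s len : ℕ) : M :=
  (((List.range' s len).map f).reverse).prod

/-- Integer power `u^z`, where `v` is a designated (two-sided) inverse of `u`. -/
def zpowOp {M : Type*} [Monoid M] (u v : M) (z : ℤ) : M :=
  if 0 ≤ z then u ^ z.toNat else v ^ (-z).toNat


theorem braid_core {A : Type*} [CommRing A] [IsDomain A] (s1 s2 : A →+* A) (x1 x2 x3 t u : A)
    (h11 : s1 x1 = x2) (h12 : s1 x2 = x1) (h13 : s1 x3 = x3) (h1t : s1 t = t) (h1u : s1 u = u)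
    (h21 : s2 x1 = x1) (h22 : s2 x2 = x3) (h23 : s2 x3 = x2) (h2t : s2 t = t) (h2u : s2 u = u)
    (i1 : ∀ p, s1 (s1 p) = p) (i2 : ∀ p, s2 (s2 p) = p)
    (hs : ∀ p, s1 (s2 (s1 p)) = s2 (s1 (s2 p)))
    (d12 : x2 - x1 ≠ 0) (d13 : x3 - x1 ≠ 0) (d23 : x3 - x2 ≠ 0) (T1 T2 : A → A)
    (hT1 : ∀ p, (x2 - x1) * T1 p = (u * x2 - t * x1) * s1 p + (t - u) * x2 * p)
    (hT2 : ∀ p, (x3 - x2) * T2 p = (u * x3 - t * x2) * s2 p + (t - u) * x3 * p) (p : A) :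
    T1 (T2 (T1 p)) = T2 (T1 (T2 p)) := by
  have key : ((x2 - x1) * (x3 - x1) * (x3 - x2)) ^ 2 ≠ 0 :=
    pow_ne_zero _ (mul_ne_zero (mul_ne_zero d12 d13) d23)
  apply mul_left_cancel₀ key
  have e1 := hT1 (T2 (T1 p))
  have e2 := hT2 (T1 p)
  have e2' := congrArg s1 e2
  have e3 := hT1 p
  have e3a := congrArg s1 e3
  have e3b := congrArg s2 e3
  have e3c := congrArg s1 e3b
  have f1 := hT2 (T1 (T2 p))
  have f2 := hT1 (T2 p)
  have f2' := congrArg s2 f2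
  have f3 := hT2 p
  have f3a := congrArg s2 f3
  have f3b := congrArg s1 f3
  have f3c := congrArg s2 f3b
  simp only [map_mul, map_sub, map_add, h11, h12, h13, h1t, h1u, h21, h22, h23, h2t, h2u, i1, i2, hs]
    at e1 e2 e2' e3 e3a e3b e3c f1 f2 f2' f3 f3a f3b f3c
  generalize T1 (T2 (T1 p)) = ε at *
  generalize T2 (T1 (T2 p)) = ζ at *
  generalize s1 (T2 (T1 p)) = γ1 at *
  generalize s2 (T1 (T2 p)) = δ2 at *
  generalize (T2 (T1 p)) = γ at *
  generalize (T1 (T2 p)) = δ at *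
  generalize s1 (s2 (T1 p)) = α12 at *
  generalize s2 (s1 (T2 p)) = β21 at *
  generalize s2 (T1 p) = α2 at *
  generalize s1 (T1 p) = α1 at *
  generalize s2 (T2 p) = β2 at *
  generalize s1 (T2 p) = β1 at *
  generalize (T1 p) = α at *
  generalize (T2 p) = β at *
  generalize s2 (s1 (s2 p)) = p212 at *
  generalize s1 (s2 p) = p12 at *
  generalize s2 (s1 p) = p21 at *
  generalize (s2 p) = p2 at *
  generalize (s1 p) = p1 at *
  linear_combination
    (x2 - x1) * (x3 - x1)^2 * (x3 - x2)^2 * e1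
    + (t - u) * x2 * (x2 - x1) * (x3 - x1)^2 * (x3 - x2) * e2
    + (u * x2 - t * x1) * (x2 - x1) * (x3 - x1) * (x3 - x2)^2 * e2'
    + (t - u) * x2 * ((t - u) * x3) * (x3 - x1)^2 * (x3 - x2) * e3
    + (t - u) * x2 * (u * x3 - t * x2) * (x2 - x1) * (x3 - x1) * (x3 - x2) * e3b
    - (u * x2 - t * x1) * ((t - u) * x3) * (x3 - x1) * (x3 - x2)^2 * e3a
    + (u * x2 - t * x1) * (u * x3 - t * x1) * (x2 - x1) * (x3 - x1) * (x3 - x2) * e3c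
    - ((x2 - x1)^2 * (x3 - x1)^2 * (x3 - x2) * f1
    + (t - u) * x3 * (x2 - x1) * (x3 - x1)^2 * (x3 - x2) * f2
    + (u * x3 - t * x2) * (x2 - x1)^2 * (x3 - x1) * (x3 - x2) * f2'
    + (t - u) * x3 * ((t - u) * x2) * (x3 - x1)^2 * (x2 - x1) * f3
    + (t - u) * x3 * (u * x2 - t * x1) * (x2 - x1) * (x3 - x1) * (x3 - x2) * f3b
    - (u * x3 - t * x2) * ((t - u) * x3) * (x3 - x1) * (x2 - x1)^2 * f3a
    + (u * x3 - t * x2) * (u * x3 - t * x1) * (x2 - x1) * (x3 - x1) * (x3 - x2) * f3c)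

theorem far_core {A : Type*} [CommRing A] [IsDomain A] (s1 s2 : A →+* A) (x1 x2 x3 x4 t u : A)
    (h13 : s1 x3 = x3) (h14 : s1 x4 = x4) (h1t : s1 t = t) (h1u : s1 u = u)
    (h21 : s2 x1 = x1) (h22 : s2 x2 = x2) (h2t : s2 t = t) (h2u : s2 u = u)
    (hs : ∀ p, s1 (s2 p) = s2 (s1 p))
    (d12 : x2 - x1 ≠ 0) (d34 : x4 - x3 ≠ 0) (T1 T2 : A → A)
    (hT1 : ∀ p, (x2 - x1) * T1 p = (u * x2 - t * x1) * s1 p + (t - u) * x2 * p)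
    (hT2 : ∀ p, (x4 - x3) * T2 p = (u * x4 - t * x3) * s2 p + (t - u) * x4 * p) (p : A) :
    T1 (T2 p) = T2 (T1 p) := by
  have key : ((x2 - x1) * (x4 - x3)) ≠ 0 := mul_ne_zero d12 d34
  apply mul_left_cancel₀ key
  have e1 := hT1 (T2 p)
  have e2 := hT2 p
  have e2' := congrArg s1 e2
  have f1 := hT2 (T1 p)
  have f2 := hT1 p
  have f2' := congrArg s2 f2
  simp only [map_mul, map_sub, map_add, h13, h14, h1t, h1u, h21, h22, h2t, h2u, hs]
    at e1 e2 e2' f1 f2 f2'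
  linear_combination (x4 - x3) * e1 + (u * x2 - t * x1) * e2' + (t - u) * x2 * e2
    - ((x2 - x1) * f1 + (u * x4 - t * x3) * f2' + (t - u) * x4 * f2)

/-- intertwining -/
theorem inter_core {A : Type*} [CommRing A] [IsDomain A] (s1 s2 P : A →+* A) (x1 x2 y1 y2 c t u : A)
    (h1 : P x1 = c * y1) (h2 : P x2 = c * y2) (hc : c ≠ 0) (ht : P t = t) (hu : P u = u)
    (hs : ∀ p, P (s1 p) = s2 (P p)) (d : y2 - y1 ≠ 0) (T1 T2 : A → A)
    (hT1 : ∀ p, (x2 - x1) * T1 p = (u * x2 - t * x1) * s1 p + (t - u) * x2 * p)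
    (hT2 : ∀ p, (y2 - y1) * T2 p = (u * y2 - t * y1) * s2 p + (t - u) * y2 * p) (p : A) :
    P (T1 p) = T2 (P p) := by
  apply mul_left_cancel₀ (mul_ne_zero hc d)
  have e1 := congrArg P (hT1 p)
  have e2 := hT2 (P p)
  simp only [map_mul, map_sub, map_add, h1, h2, ht, hu, hs] at e1
  linear_combination e1 - c * e2

theorem Tx_core {A : Type*} [CommRing A] [IsDomain A] (s1 : A →+* A) (x1 x2 t u : A)
    (h1 : s1 x1 = x2) (d : x2 - x1 ≠ 0) (T1 : A → A)
    (hT1 : ∀ p, (x2 - x1) * T1 p = (u * x2 - t * x1) * s1 p + (t - u) * x2 * p) (p : A) :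
    T1 (x1 * p) = x2 * (T1 p + (u - t) * p) := by
  apply mul_left_cancel₀ d
  have e1 := hT1 (x1 * p)
  have e2 := hT1 p
  simp only [map_mul, h1] at e1
  linear_combination e1 - x2 * e2

theorem Tfarx_core {A : Type*} [CommRing A] [IsDomain A] (s1 : A →+* A) (x1 x2 x3 t u : A)
    (h1 : s1 x3 = x3) (d : x2 - x1 ≠ 0) (T1 : A → A)
    (hT1 : ∀ p, (x2 - x1) * T1 p = (u * x2 - t * x1) * s1 p + (t - u) * x2 * p) (p : A) :
    T1 (x3 * p) = x3 * T1 p := by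
  apply mul_left_cancel₀ d
  have e1 := hT1 (x3 * p)
  have e2 := hT1 p
  simp only [map_mul, h1] at e1
  linear_combination e1 - x3 * e2
section abs
variable {F B : Type*} [Field F] [Ring B] [Algebra F B]

theorem rank2_core (A Y y t s : B) (h : F)
    (hts : t * s = 1) (hst : s * t = 1) (hYy : Y * y = 1) (hyY : y * Y = 1)
    (hh : t = s + h • (1 : B))
    (R1 : t * A * t * A = A * t * A * t) (R2 : t * Y * t * Y = Y * t * Y * t)
    (R3 : t * A * t * Y * t = Y * t * A) :
    t * (A * (Y - y)) * t * (A * (Y - y)) = (A * (Y - y)) * t * (A * (Y - y)) * t := by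
  -- y t A = t A s y s
  have R3' : y * t * A = t * A * s * y * s := by
    have : y * (t * A * t * Y * t) * s * y * s = y * (Y * t * A) * s * y * s := by rw [R3]
    have e1 : y * (t * A * t * Y * t) * s * y * s = y * t * A := by
      calc _ = y * t * A * t * Y * (t * s) * y * s := by noncomm_ring
        _ = y * t * A * t * (Y * y) * s := by rw [hts]; noncomm_ring
        _ = y * t * A * (t * s) := by rw [hYy]; noncomm_ring
        _ = _ := by rw [hts, mul_one]
    rw [e1] at this
    rw [this]
    calc _ = (y * Y) * t * A * s * y * s := by noncomm_ring
      _ = _ := by rw [hyY, one_mul]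
  -- t Y t commutes with y ; s y s commutes with Y, y
  have c1 : t * Y * t * y = y * (t * Y * t) := by
    calc t * Y * t * y = (y * Y) * (t * Y * t) * y := by rw [hyY, one_mul]
      _ = y * (Y * t * Y * t) * y := by noncomm_ring
      _ = y * (t * Y * t * Y) * y := by rw [R2]
      _ = y * (t * Y * t) * (Y * y) := by noncomm_ring
      _ = _ := by rw [hYy, mul_one]
  have inv1 : (s * y * s) * (t * Y * t) = 1 := by
    calc _ = s * y * (s * t) * Y * t := by noncomm_ring
      _ = s * (y * Y) * t := by rw [hst]; noncomm_ring
      _ = 1 := by rw [hyY, mul_one, hst]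
  have inv2 : (t * Y * t) * (s * y * s) = 1 := by
    calc _ = t * Y * (t * s) * y * s := by noncomm_ring
      _ = t * (Y * y) * s := by rw [hts]; noncomm_ring
      _ = 1 := by rw [hYy, mul_one, hts]
  have c2 : s * y * s * Y = Y * (s * y * s) := by
    calc s * y * s * Y = s * y * s * (Y * ((t * Y * t) * (s * y * s))) := by rw [inv2, mul_one]
      _ = s * y * s * (Y * t * Y * t) * (s * y * s) := by noncomm_ring
      _ = s * y * s * (t * Y * t * Y) * (s * y * s) := by rw [R2]
      _ = (s * y * s) * (t * Y * t) * (Y * (s * y * s)) := by noncomm_ring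
      _ = _ := by rw [inv1, one_mul]
  have c3 : s * y * s * y = y * (s * y * s) := by
    calc s * y * s * y = (y * Y) * (s * y * s) * y := by rw [hyY, one_mul]
      _ = y * (s * y * s * Y) * y := by rw [c2]; noncomm_ring
      _ = y * (s * y * s) * (Y * y) := by noncomm_ring
      _ = _ := by rw [hYy, mul_one]
  have L : t * (A * (Y - y)) * t * (A * (Y - y)) =
      t * A * t * A * ((t * Y * t - s * y * s) * (Y - y)) := by
    calc _ = t * A * ((Y * t * A) - (y * t * A)) * (Y - y) := by noncomm_ring
      _ = t * A * ((t * A * t * Y * t) - (t * A * s * y * s)) * (Y - y) := by rw [R3, R3']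
      _ = _ := by noncomm_ring
  have Rr : (A * (Y - y)) * t * (A * (Y - y)) * t =
      t * A * t * A * ((Y * t - s * s * y * s) * (Y - y) * t) := by
    calc _ = A * ((Y * t * A) - (y * t * A)) * (Y - y) * t := by noncomm_ring
      _ = A * ((t * A * t * Y * t) - (t * A * (t * s) * s * y * s)) * (Y - y) * t := by
          rw [R3, R3', hts, mul_one]
      _ = A * t * A * t * ((Y * t - s * s * y * s) * (Y - y) * t) := by noncomm_ring
      _ = _ := by rw [R1]
  rw [L, Rr]
  congr 1
  -- now in the algebra generated by t, Y
  have a1 : s * s * y * s * Y * t = s * Y * s * y := by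
    calc _ = s * (s * y * s * Y) * t := by noncomm_ring
      _ = s * Y * s * y * (s * t) := by rw [c2]; noncomm_ring
      _ = _ := by rw [hst, mul_one]
  have a2 : s * s * y * s * y * t = s * y * s * y := by
    calc _ = s * (s * y * s * y) * t := by noncomm_ring
      _ = s * y * s * y * (s * t) := by 
        rw [show s * (s * y * s * y) = s * (y * (s * y * s)) by rw [c3]]; noncomm_ring
      _ = _ := by rw [hst, mul_one]
  have b1 : t * Y * t * y - s * Y * s * y = h • t + h • (Y * s * y) := by
    have : t * Y * t * y = t * Y * s * y + h • t := by
      conv_lhs => rw [show t * Y * t * y = t * Y * (s + h • (1 : B)) * y by rw [← hh]]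
      rw [mul_add, add_mul, mul_smul_comm, mul_one, smul_mul_assoc, mul_assoc t Y y, hYy, mul_one]
    rw [this, hh]
    simp only [add_mul, smul_mul_assoc, one_mul]
    abel
  have b2 : s * y * s * Y - Y * t * y * t = - (h • t + h • (Y * s * y)) := by
    have : Y * t * y * t = Y * s * y * t + h • t := by
      conv_lhs => rw [show Y * t * y * t = Y * (s + h • (1 : B)) * y * t by rw [← hh]]
      rw [mul_add, add_mul, add_mul, mul_smul_comm, mul_one, smul_mul_assoc, hYy, smul_mul_assoc,
        one_mul]
    rw [this, c2, hh]
    simp only [mul_add, mul_smul_comm, mul_one, smul_add, ← mul_assoc]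
    abel
  have E : (t * Y * t - s * y * s) * (Y - y) - (Y * t - s * s * y * s) * (Y - y) * t
      = (t * Y * t * Y - Y * t * Y * t) - (t * Y * t * y - s * s * y * s * Y * t)
        - (s * y * s * Y - Y * t * y * t) + (s * y * s * y - s * s * y * s * y * t) := by
    noncomm_ring
  rw [← sub_eq_zero, E, a1, a2, R2, b1, b2]
  abel
end abs

section chain
variable {B : Type*} [Ring B]

/-- commuting family from the last one -/
theorem chain_core (n : ℕ) (T D : ℕ → B)
    (hbr : ∀ k, k + 2 < n → T k * T (k+1) * T k = T (k+1) * T k * T (k+1))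
    (hfar : ∀ i j, i + 1 < j → j + 1 < n → T i * T j = T j * T i)
    (hD : ∀ i, i + 1 < n → D i = T i * D (i+1) * T i)
    (hTD : ∀ k, k + 2 < n → T k * D (n-1) = D (n-1) * T k)
    (hlast : 2 ≤ n → D (n-2) * D (n-1) = D (n-1) * D (n-2)) :
    ∀ i j, i < n → j < n → D i * D j = D j * D i := by
  have far' : ∀ i j, i + 1 < j → j + 1 < n → Commute (T i) (T j) := hfar
  -- T_k commutes with D_j, k+1<j
  have c1 : ∀ m j k, j + m + 1 = n → k + 1 < j → Commute (T k) (D j) := by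
    intro m
    induction m with
    | zero => intro j k hj hk
              have : j = n - 1 := by omega
              subst this
              exact hTD k (by omega)
    | succ m ih =>
      intro j k hj hk
      rw [hD j (by omega)]
      have a := far' k j hk (by omega)
      exact (a.mul_right (ih (j+1) k (by omega) (by omega))).mul_right a
  have c1' : ∀ j k, j < n → k + 1 < j → Commute (T k) (D j) := fun j k h1 h2 =>
    c1 (n - 1 - j) j k (by omega) h2
  have c2 : ∀ m j k, j + m + 1 = k → k + 1 < n → Commute (T k) (D j) := by
    intro m
    induction m with
    | zero =>
      intro j k hj hk
      subst hj
      simp only [add_zero] at *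
      rw [hD j (by omega), hD (j+1) hk]
      have a : Commute (T j) (D (j+1+1)) := c1' _ _ hk (by omega)
      have b := hbr j hk
      show _ = _
      calc T (j+1) * (T j * (T (j+1) * D (j+1+1) * T (j+1)) * T j)
          = (T (j+1) * T j * T (j+1)) * D (j+1+1) * T (j+1) * T j := by noncomm_ring
        _ = T j * T (j+1) * (T j * D (j+1+1)) * T (j+1) * T j := by rw [← b]; noncomm_ring
        _ = T j * T (j+1) * D (j+1+1) * (T j * T (j+1) * T j) := by rw [a.eq]; noncomm_ring
        _ = _ := by rw [b]; noncomm_ring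
    | succ m ih =>
      intro j k hj hk
      rw [hD j (by omega)]
      have a := (far' j k (by omega) hk).symm
      exact (a.mul_right (ih (j+1) k (by omega) hk)).mul_right a
  have c2' : ∀ j k, j < k → k + 1 < n → Commute (T k) (D j) := fun j k h1 h2 =>
    c2 (k - 1 - j) j k (by omega) h2
  have d1 : ∀ m i, i + m + 2 = n → Commute (D i) (D (n-1)) := by
    intro m
    induction m with
    | zero => intro i hi
              have : i = n - 2 := by omega
              subst this
              exact hlast (by omega)
    | succ m ih =>
      intro i hi
      rw [hD i (by omega)]
      have a : Commute (T i) (D (n-1)) := c1' _ _ (by omega) (by omega)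
      exact (a.mul_left (ih (i+1) (by omega))).mul_left a
  have d2 : ∀ m i j, i < j → j + m + 1 = n → Commute (D i) (D j) := by
    intro m
    induction m with
    | zero => intro i j hij hj
              have : j = n - 1 := by omega
              subst this
              exact d1 (n - 2 - i) i (by omega)
    | succ m ih =>
      intro i j hij hj
      rw [hD j (by omega)]
      have a : Commute (D i) (T j) := (c2' i j hij (by omega)).symm
      exact (a.mul_right (ih i (j+1) (by omega) (by omega))).mul_right a
  intro i j hi hj
  rcases lt_trichotomy i j with h | h | h
  · exact d2 (n - 1 - j) i j h (by omega)
  · rw [h]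
  · exact (d2 (n - 1 - i) j i h (by omega)).symm
end chain

section braidprods
variable {M : Type*} [Ring M]

theorem aF_succ (f : ℕ → M) (s len : ℕ) : aF f s (len+1) = aF f s len * f (s+len) := by
  simp [aF, List.range'_concat]

theorem aF_succ' (f : ℕ → M) (s len : ℕ) : aF f s (len+1) = f s * aF f (s+1) len := by
  simp [aF, List.range'_succ]

theorem dF_succ' (f : ℕ → M) (s len : ℕ) : dF f s (len+1) = dF f (s+1) len * f s := by
  simp [dF, List.range'_succ]

theorem aF_commute (f : ℕ → M) (x : M) (s len : ℕ)
    (h : ∀ k, s ≤ k → k < s + len → Commute x (f k)) : Commute x (aF f s len) := by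
  induction len with
  | zero => simp [aF]
  | succ m ih =>
    rw [aF_succ]
    exact (ih fun k h1 h2 => h k h1 (by omega)).mul_right (h _ (by omega) (by omega))

/-- `T_{j+1} (S_0 ⋯ S_{m-1}) = (S_0 ⋯ S_{m-1}) T_j` for `j+1<m`. -/
theorem shift_core (N : ℕ) (T S : ℕ → M)
    (hTS : ∀ k, k < N → T k * S k = 1 ∧ S k * T k = 1)
    (hbr : ∀ k, k + 1 < N → T k * T (k+1) * T k = T (k+1) * T k * T (k+1))
    (hfar : ∀ i j, i + 1 < j → j < N → Commute (T i) (T j))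
    (hS : ∀ i x, i < N → Commute x (T i) → Commute x (S i)) :
    (∀ j m, j + 1 < m → m ≤ N → T (j+1) * aF S 0 m = aF S 0 m * T j) ∧
    (∀ m, m + 1 ≤ N → T 0 * (aF S 1 m * aF S 0 m) = (aF S 1 m * aF S 0 m) * T m) := by
  have b1 : ∀ k, k + 1 < N → T (k+1) * (S k * S (k+1)) = S k * S (k+1) * T k := by
    intro k hk
    obtain ⟨p1, p2⟩ := hTS k (by omega)
    obtain ⟨q1, q2⟩ := hTS (k+1) (by omega)
    calc T (k+1) * (S k * S (k+1))
        = S k * (S (k+1) * T (k+1)) * T k * T (k+1) * S k * S (k+1) := by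
          rw [q2, mul_one, p2, one_mul, mul_assoc]
      _ = S k * S (k+1) * (T (k+1) * T k * T (k+1)) * S k * S (k+1) := by noncomm_ring
      _ = S k * S (k+1) * T k * T (k+1) * (T k * S k) * S (k+1) := by rw [← hbr k hk]; noncomm_ring
      _ = S k * S (k+1) * T k * (T (k+1) * S (k+1)) := by rw [p1]; noncomm_ring
      _ = _ := by rw [q1, mul_one]
  have b2 : ∀ k, k + 1 < N → T k * (S (k+1) * S k) = S (k+1) * S k * T (k+1) := by
    intro k hk
    obtain ⟨p1, p2⟩ := hTS k (by omega)
    obtain ⟨q1, q2⟩ := hTS (k+1) (by omega)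
    calc T k * (S (k+1) * S k)
        = S (k+1) * (S k * T k) * T (k+1) * T k * S (k+1) * S k := by
          rw [p2, mul_one, q2, one_mul, mul_assoc]
      _ = S (k+1) * S k * (T k * T (k+1) * T k) * S (k+1) * S k := by noncomm_ring
      _ = S (k+1) * S k * T (k+1) * T k * (T (k+1) * S (k+1)) * S k := by rw [hbr k hk]; noncomm_ring
      _ = S (k+1) * S k * T (k+1) * (T k * S k) := by rw [q1]; noncomm_ring
      _ = _ := by rw [p1, mul_one]
  constructor
  · intro j m hj
    induction m with
    | zero => omega
    | succ m ih =>
      intro hm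
      rw [aF_succ, zero_add]
      rcases Nat.lt_or_ge (j+1) m with h | h
      · rw [← mul_assoc, ih h (by omega), mul_assoc, mul_assoc,
          (hS m (T j) (by omega) (hfar j m h (by omega))).eq]
      · have : m = j + 1 := by omega
        subst this
        rw [aF_succ, zero_add, mul_assoc, mul_assoc, mul_assoc, ← mul_assoc (S j), ← b1 j (by omega)]
        have : Commute (T (j+1)) (aF S 0 j) := aF_commute _ _ _ _ fun k _ h2 =>
          hS k _ (by omega) (hfar k (j+1) (by omega) (by omega)).symm
        rw [← mul_assoc, this.eq, mul_assoc]
  · intro m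
    induction m with
    | zero => intro _; simp [aF]
    | succ m ih =>
      intro hm
      have e : aF S 1 (m+1) * aF S 0 (m+1) = (aF S 1 m * aF S 0 m) * (S (m+1) * S m) := by
        have : Commute (S (m+1)) (aF S 0 m) := aF_commute _ _ _ _ fun k _ h2 =>
          hS k _ (by omega) (hS (m+1) _ (by omega) (hfar k (m+1) (by omega) (by omega))).symm
        rw [aF_succ, aF_succ, zero_add, add_comm 1 m, mul_assoc, ← mul_assoc (S (m+1)), this.eq]
        noncomm_ring
      rw [e, ← mul_assoc, ih (by omega), mul_assoc, b2 m (by omega)]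
      noncomm_ring
end braidprods
section ops
variable {F : Type*} [Field F]

theorem mono_mul (a b : Fin n →₀ ℤ) (c d : F) :
    (mono a c : Laur F n) * mono b d = mono (a + b) (c * d) := by
  simp [mono, AddMonoidAlgebra.single_mul_single]

theorem mono_one : (mono 0 1 : Laur F n) = 1 := rfl

theorem laur_ind {p : Laur F n → Prop} (x : Laur F n) (h0 : p 0)
    (hadd : ∀ x y, p x → p y → p (x + y)) (hm : ∀ a c, p (mono a c)) : p x := by
  induction x using AddMonoidAlgebra.induction_linear with
  | zero => exact h0
  | add f g hf hg => exact hadd f g hf hg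
  | single a b => exact hm a b

theorem lin_ext {f g : Module.End F (Laur F n)} (h : ∀ a c, f (mono a c) = g (mono a c)) :
    f = g := by
  refine LinearMap.ext fun x => ?_
  induction x using laur_ind with
  | h0 => simp
  | hadd x y hx hy => simp [hx, hy]
  | hm a c => exact h a c

/-- A twisted monomial map is an algebra homomorphism. -/
theorem exists_algHom (f : Module.End F (Laur F n)) (w : Equiv.Perm (Fin n))
    (χ : (Fin n →₀ ℤ) → F) (χ0 : χ 0 = 1) (χa : ∀ a b, χ (a + b) = χ a * χ b)
    (hf : ∀ a c, f (mono a c) = χ a • mono (Finsupp.equivMapDomain w a) c) :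
    ∃ φ : Laur F n →ₐ[F] Laur F n, ∀ p, φ p = f p := by
  have h1 : f 1 = 1 := by
    rw [← mono_one, hf, χ0, one_smul]
    simp [Finsupp.equivMapDomain_zero]
  have hmul : ∀ x y, f (x * y) = f x * f y := by
    intro x y
    induction x using laur_ind with
    | h0 => simp
    | hadd x x' hx hy => simp [add_mul, hx, hy]
    | hm a c =>
      induction y using laur_ind with
      | h0 => simp
      | hadd x y hx hy => simp [mul_add, hx, hy]
      | hm b d =>
        rw [mono_mul, hf, hf, hf, χa, smul_mul_smul_comm, mono_mul]
        congr 2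
        ext i
        simp [Finsupp.equivMapDomain_apply]
  exact ⟨AlgHom.ofLinearMap f h1 hmul, fun p => rfl⟩

theorem Xel_sub_ne {i j : Fin n} (h : i ≠ j) : (Xel i - Xel j : Laur F n) ≠ 0 := by
  intro H
  rw [sub_eq_zero] at H
  simp only [Xel, mono] at H
  have := AddMonoidAlgebra.single_left_injective (R := F) one_ne_zero H
  have := Finsupp.single_left_injective (one_ne_zero : (1 : ℤ) ≠ 0) this
  exact h this

theorem XOp_apply (i : ℕ) (h : i < n) (p : Laur F n) : XOp i p = Xel ⟨i, h⟩ * p := by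
  simp [XOp, h, mulOp]

theorem XX (i : ℕ) : (XOp i * XinvOp i : Module.End F (Laur F n)) = 1 ∧
    (XinvOp i * XOp i : Module.End F (Laur F n)) = 1 := by
  unfold XOp XinvOp
  split_ifs with h
  · constructor
    · refine LinearMap.ext fun p => ?_
      simp [mulOp, Xel, XinvEl, ← mul_assoc, mono_mul, ← Finsupp.single_add, mono_one]
    · refine LinearMap.ext fun p => ?_
      simp [mulOp, Xel, XinvEl, ← mul_assoc, mono_mul, ← Finsupp.single_add, mono_one]
  · simp

theorem XOp_comm (i j : ℕ) : (XOp i * XOp j : Module.End F (Laur F n)) = XOp j * XOp i := by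
  unfold XOp mulOp
  split_ifs <;> try rfl
  refine LinearMap.ext fun p => ?_
  simp [mul_left_comm]

theorem inv_comm {M : Type*} [Monoid M] {x y z x' y' : M} (hx : x * x' = 1) (hy : y' * y = 1)
    (h : z * x = y * z) : y' * z = z * x' := by
  calc y' * z = y' * (z * x) * x' := by rw [mul_assoc, mul_assoc, hx, mul_one]
    _ = (y' * y) * z * x' := by rw [h]; simp only [mul_assoc]
    _ = z * x' := by rw [hy, one_mul]

theorem swap_ap (w : Equiv.Perm (Fin n)) (i : Fin n) (W : Laur F n → Laur F n)
    (hW : ∀ (a : Fin n →₀ ℤ) (c : F), W (mono a c) = mono (Finsupp.equivMapDomain w a) c) :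
    W (Xel i) = Xel (w i) := by
  rw [Xel, hW, Finsupp.equivMapDomain_single]; rfl

theorem emd_trans (w v : Equiv.Perm (Fin n)) (a : Fin n →₀ ℤ) :
    Finsupp.equivMapDomain w (Finsupp.equivMapDomain v a) = Finsupp.equivMapDomain (w * v) a := by
  ext i
  simp [Finsupp.equivMapDomain_apply, Equiv.Perm.mul_def]

end ops
/-- The quadratic relations among the elements `e_{ij} = X_i D_j`,
with `S^τ_{ij} = [D_i, X_j]` (indices `0`-based). -/
theorem statement8
    (F : Type*) [Field F] (n : ℕ) [NeZero n]
    (q τ : F) (hq : q ≠ 0) (hqroot : ∀ m : ℕ, m ≠ 0 → q ^ m ≠ 1) (hτ : τ ≠ 0)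
    -- the action of the symmetric group permuting the variables
    (W : Equiv.Perm (Fin n) → Module.End F (Laur F n))
    (hW : ∀ (w : Equiv.Perm (Fin n)) (a : Fin n →₀ ℤ) (c : F),
      W w (mono a c) = mono (Finsupp.equivMapDomain w a) c)
    -- the Demazure–Lusztig operators `T_k` and their inverses `Ti k = T k + τ⁻¹ - τ`
    (T Ti : ℕ → Module.End F (Laur F n))
    (hT : ∀ (k : ℕ) (hk : k + 1 < n) (p : Laur F n),
      (Xel ⟨k + 1, hk⟩ - Xel ⟨k, Nat.lt_of_succ_lt hk⟩) * T k p
        = (τ⁻¹ • Xel ⟨k + 1, hk⟩ - τ • Xel ⟨k, Nat.lt_of_succ_lt hk⟩)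
            * W (Equiv.swap ⟨k, Nat.lt_of_succ_lt hk⟩ ⟨k + 1, hk⟩) p
          + (τ - τ⁻¹) • (Xel ⟨k + 1, hk⟩ * p))
    (hTi : ∀ k, Ti k = T k + (τ⁻¹ - τ) • (1 : Module.End F (Laur F n)))
    (hTinv : ∀ k, k + 1 < n → T k * Ti k = 1 ∧ Ti k * T k = 1)
    -- the operator `π⁻¹`
    (piInv : Module.End F (Laur F n))
    (hpiInv : ∀ (a : Fin n →₀ ℤ) (c : F),
      piInv (mono a c)
        = q ^ (a 0) • mono (Finsupp.equivMapDomain (finRotate n).symm a) c)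
    -- the operators `Y_i = T_i ⋯ T_{n-1} ⬝ π⁻¹ ⬝ T_1⁻¹ ⋯ T_{i-1}⁻¹` and their inverses
    (Y Yi : ℕ → Module.End F (Laur F n))
    (hY : ∀ i, Y i = aF T i (n - 1 - i) * piInv * aF Ti 0 i)
    (hYinv : ∀ i, i < n → Y i * Yi i = 1 ∧ Yi i * Y i = 1)
    -- the `q`-Dunkl-type operators `D_i`
    (D : ℕ → Module.End F (Laur F n))
    (hD : ∀ i, D i = aF T i (n - 1 - i)
        * ((q - q⁻¹)⁻¹ • (XinvOp (n - 1) * (Y (n - 1) - Yi (n - 1))))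
        * dF T i (n - 1 - i))
    -- the operators `e_{ij} = X_i · D_j`
    (e : ℕ → ℕ → Module.End F (Laur F n))
    (he : ∀ i j, e i j = XOp i * D j)
    -- the operators `S^τ_{ij} = [D_i, X_j]`
    (S : ℕ → ℕ → Module.End F (Laur F n))
    (hS : ∀ i j, S i j = D i * XOp j - XOp j * D i)
    :
    ∀ i j k l : ℕ, i < n → j < n → k < n → l < n → i ≠ j → k ≠ l →
      (e i j * e k l - e i l * e k j = e i l * S j k - e i j * S l k) ∧
      (e i j * e k l - e k j * e i l = S j k * e i l - S j i * e k l) := by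
  set t : Laur F n := algebraMap F _ τ with ht
  set u : Laur F n := algebraMap F _ τ⁻¹ with hu
  have hWa : ∀ w, ∃ φ : Laur F n →ₐ[F] Laur F n, ∀ p, φ p = W w p := fun w =>
    exists_algHom (W w) w (fun _ => 1) rfl (by simp) (by intro a c; rw [hW, one_smul])
  choose φ hφ using hWa
  obtain ⟨P, hP⟩ : ∃ φ : Laur F n →ₐ[F] Laur F n, ∀ p, φ p = piInv p :=
    exists_algHom piInv (finRotate n).symm (fun a => q ^ (a 0)) (by simp)
      (by intro a b; simp [zpow_add₀ hq]) hpiInv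
  have φX : ∀ w i, φ w (Xel i) = Xel (w i) := fun w i =>
    swap_ap w i (φ w) (by intro a c; rw [hφ, hW])
  have φφ : ∀ w v p, φ w (φ v p) = φ (w * v) p := by
    intro w v p
    have : W w * W v = W (w * v) := lin_ext fun a c => by
      simp only [Module.End.mul_apply, hW, emd_trans]
    rw [hφ, hφ, hφ, ← this, Module.End.mul_apply]
  have φ1 : ∀ p, φ 1 p = p := by
    intro p
    have : W 1 = 1 := lin_ext fun a c => by
      rw [hW, Module.End.one_apply, Equiv.Perm.one_def, Finsupp.equivMapDomain_refl]
    rw [hφ, this, Module.End.one_apply]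
  have hT' : ∀ (k : ℕ) (hk : k + 1 < n) (p : Laur F n),
      (Xel ⟨k + 1, hk⟩ - Xel ⟨k, Nat.lt_of_succ_lt hk⟩) * T k p
        = (u * Xel ⟨k + 1, hk⟩ - t * Xel ⟨k, Nat.lt_of_succ_lt hk⟩)
            * φ (Equiv.swap ⟨k, Nat.lt_of_succ_lt hk⟩ ⟨k + 1, hk⟩) p
          + (t - u) * Xel ⟨k + 1, hk⟩ * p := by
    intro k hk p
    rw [hT k hk p, hφ, ht, hu, Algebra.smul_def, Algebra.smul_def, Algebra.smul_def, map_sub,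
      mul_assoc (_ - _) (Xel _) p]
  have hdne : ∀ (i j : ℕ) (hi : i < n) (hj : j < n), i ≠ j →
      (Xel ⟨i, hi⟩ - Xel ⟨j, hj⟩ : Laur F n) ≠ 0 := fun i j hi hj h =>
    Xel_sub_ne (by simpa [Fin.ext_iff] using h)
  have hbr : ∀ k, k + 2 < n → T k * T (k+1) * T k = T (k+1) * T k * T (k+1) := by
    intro k hk
    refine LinearMap.ext fun p => ?_
    simp only [Module.End.mul_apply]
    have n1 : (⟨k, by omega⟩ : Fin n) ≠ ⟨k+1, by omega⟩ := by simp [Fin.ext_iff]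
    have n2 : (⟨k, by omega⟩ : Fin n) ≠ ⟨k+1+1, by omega⟩ := by simp [Fin.ext_iff]; omega
    have n3 : (⟨k+1, by omega⟩ : Fin n) ≠ ⟨k+1+1, by omega⟩ := by simp [Fin.ext_iff]
    refine braid_core
      (φ (Equiv.swap ⟨k, by omega⟩ ⟨k+1, by omega⟩)).toRingHom
      (φ (Equiv.swap ⟨k+1, by omega⟩ ⟨k+1+1, by omega⟩)).toRingHom
      (Xel ⟨k, by omega⟩) (Xel ⟨k+1, by omega⟩) (Xel ⟨k+1+1, by omega⟩) t u
      ?_ ?_ ?_ ?_ ?_ ?_ ?_ ?_ ?_ ?_ ?_ ?_ ?_ ?_ ?_ ?_ (T k) (T (k+1)) (hT' k (by omega))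
      (hT' (k+1) hk) p
    · simp [φX]
    · simp [φX]
    · simp [φX, Equiv.swap_apply_of_ne_of_ne n2.symm n3.symm]
    · exact AlgHom.commutes _ _
    · exact AlgHom.commutes _ _
    · simp [φX, Equiv.swap_apply_of_ne_of_ne n1 n2]
    · simp [φX]
    · simp [φX]
    · exact AlgHom.commutes _ _
    · exact AlgHom.commutes _ _
    · intro p; simp [φφ, φ1]
    · intro p; simp [φφ, φ1]
    · intro p
      simp only [AlgHom.toRingHom_eq_coe, RingHom.coe_coe, φφ]
      congr 2
      have e1 := Equiv.swap_mul_swap_mul_swap n3.symm n2.symm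
      have e2 := Equiv.swap_mul_swap_mul_swap n1 n2
      rw [Equiv.swap_comm (⟨k+1, _⟩ : Fin n) ⟨k, _⟩, Equiv.swap_comm (⟨k+1+1, _⟩ : Fin n) ⟨k+1, _⟩] at e1
      rw [← mul_assoc, ← mul_assoc, e1, e2, Equiv.swap_comm]
    · exact hdne _ _ _ _ (by omega)
    · exact hdne _ _ _ _ (by omega)
    · exact hdne _ _ _ _ (by omega)
  have hfar : ∀ i j, i + 1 < j → j + 1 < n → T i * T j = T j * T i := by
    intro i j hij hj
    refine LinearMap.ext fun p => ?_
    simp only [Module.End.mul_apply]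
    have n1 : (⟨i, by omega⟩ : Fin n) ≠ ⟨j, by omega⟩ := by simp [Fin.ext_iff]; omega
    have n2 : (⟨i, by omega⟩ : Fin n) ≠ ⟨j+1, by omega⟩ := by simp [Fin.ext_iff]; omega
    have n3 : (⟨i+1, by omega⟩ : Fin n) ≠ ⟨j, by omega⟩ := by simp [Fin.ext_iff]; omega
    have n4 : (⟨i+1, by omega⟩ : Fin n) ≠ ⟨j+1, by omega⟩ := by simp [Fin.ext_iff]; omega
    refine far_core
      (φ (Equiv.swap ⟨i, by omega⟩ ⟨i+1, by omega⟩)).toRingHom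
      (φ (Equiv.swap ⟨j, by omega⟩ ⟨j+1, by omega⟩)).toRingHom
      (Xel ⟨i, by omega⟩) (Xel ⟨i+1, by omega⟩) (Xel ⟨j, by omega⟩) (Xel ⟨j+1, by omega⟩) t u
      ?_ ?_ ?_ ?_ ?_ ?_ ?_ ?_ ?_ ?_ ?_ (T i) (T j) (hT' i (by omega)) (hT' j hj) p
    · simp [φX, Equiv.swap_apply_of_ne_of_ne n1.symm n3.symm]
    · simp [φX, Equiv.swap_apply_of_ne_of_ne n2.symm n4.symm]
    · exact AlgHom.commutes _ _
    · exact AlgHom.commutes _ _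
    · simp [φX, Equiv.swap_apply_of_ne_of_ne n1 n2]
    · simp [φX, Equiv.swap_apply_of_ne_of_ne n3 n4]
    · exact AlgHom.commutes _ _
    · exact AlgHom.commutes _ _
    · intro p
      simp only [AlgHom.toRingHom_eq_coe, RingHom.coe_coe, φφ]
      congr 2
      rw [Equiv.mul_swap_eq_swap_mul, Equiv.swap_apply_of_ne_of_ne n1.symm n3.symm,
        Equiv.swap_apply_of_ne_of_ne n2.symm n4.symm]
    · exact hdne _ _ _ _ (by omega)
    · exact hdne _ _ _ _ (by omega)
  -- rotation
  have hrot : ∀ (k : ℕ) (hk : k + 1 < n), (finRotate n).symm ⟨k+1, hk⟩ = ⟨k, by omega⟩ := by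
    intro k hk
    rw [Equiv.symm_apply_eq]
    obtain ⟨m, rfl⟩ : ∃ m, n = m + 1 := ⟨n - 1, by omega⟩
    rw [finRotate_of_lt (by omega)]
  have hrot0 : (finRotate n).symm 0 = ⟨n - 1, by have := NeZero.pos n; omega⟩ := by
    rw [Equiv.symm_apply_eq]
    obtain ⟨m, rfl⟩ : ∃ m, n = m + 1 := ⟨n - 1, by have := NeZero.pos n; omega⟩
    simp only [Nat.add_sub_cancel]
    rw [finRotate_last']
    rfl
  have PX : ∀ (k : ℕ) (hk : k + 1 < n), P (Xel ⟨k+1, hk⟩) = Xel ⟨k, by omega⟩ := by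
    intro k hk
    rw [hP, Xel, hpiInv, Finsupp.equivMapDomain_single, hrot k hk, Finsupp.single_apply,
      if_neg (by simp [Fin.ext_iff]), zpow_zero, one_smul]; rfl
  have PX0 : P (Xel 0) = algebraMap F _ q * Xel ⟨n - 1, by have := NeZero.pos n; omega⟩ := by
    rw [hP, Xel, hpiInv, Finsupp.equivMapDomain_single, hrot0, Finsupp.single_apply,
      if_pos rfl, zpow_one, Algebra.smul_def]; rfl
  have hPT : ∀ k, k + 2 < n → piInv * T (k+1) = T k * piInv := by
    intro k hk
    refine LinearMap.ext fun p => ?_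
    simp only [Module.End.mul_apply, ← hP]
    refine inter_core
      (φ (Equiv.swap ⟨k+1, by omega⟩ ⟨k+1+1, by omega⟩)).toRingHom
      (φ (Equiv.swap ⟨k, by omega⟩ ⟨k+1, by omega⟩)).toRingHom P.toRingHom
      (Xel ⟨k+1, by omega⟩) (Xel ⟨k+1+1, by omega⟩) (Xel ⟨k, by omega⟩) (Xel ⟨k+1, by omega⟩) 1 t u
      ?_ ?_ ?_ ?_ ?_ ?_ ?_ (T (k+1)) (T k) (hT' (k+1) (by omega)) (hT' k (by omega)) p
    · simp [PX]
    · simp [PX]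
    · exact one_ne_zero
    · exact AlgHom.commutes _ _
    · exact AlgHom.commutes _ _
    · intro p
      simp only [AlgHom.toRingHom_eq_coe, RingHom.coe_coe, hφ, hP]
      rw [← Module.End.mul_apply, ← Module.End.mul_apply]
      congr 1
      refine lin_ext fun a c => ?_
      rw [Module.End.mul_apply, Module.End.mul_apply, hW, hpiInv, hpiInv, map_smul, hW,
        emd_trans, emd_trans, Equiv.mul_swap_eq_swap_mul, hrot, hrot, Finsupp.equivMapDomain_apply,
        Equiv.symm_swap, Equiv.swap_apply_of_ne_of_ne]
      · simp [Fin.ext_iff]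
      · simp [Fin.ext_iff]
    · exact hdne _ _ _ _ (by omega)
  have hPPT : 2 ≤ n → piInv * piInv * T 0 = T (n - 2) * (piInv * piInv) := by
    intro hn
    obtain ⟨m, rfl⟩ : ∃ m, n = m + 2 := ⟨n - 2, by omega⟩
    rw [show m + 2 - 2 = m by omega]
    have e1 : (⟨m + 2 - 1, by omega⟩ : Fin (m+2)) = ⟨m + 1, by omega⟩ := rfl
    rw [e1] at PX0 hrot0
    refine LinearMap.ext fun p => ?_
    simp only [Module.End.mul_apply, ← hP]
    refine inter_core
      (φ (Equiv.swap ⟨0, by omega⟩ ⟨0+1, by omega⟩)).toRingHom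
      (φ (Equiv.swap ⟨m, by omega⟩ ⟨m+1, by omega⟩)).toRingHom (P.comp P).toRingHom
      (Xel ⟨0, by omega⟩) (Xel ⟨0+1, by omega⟩) (Xel ⟨m, by omega⟩) (Xel ⟨m+1, by omega⟩)
      (algebraMap F _ q) t u
      ?_ ?_ ?_ ?_ ?_ ?_ ?_ (T 0) (T m) (hT' 0 (by omega)) (hT' m (by omega)) p
    · have : P (P (Xel 0)) = algebraMap F _ q * Xel ⟨m, by omega⟩ := by
        rw [PX0, map_mul, AlgHom.commutes, PX]
      exact this
    · have : P (P (Xel ⟨0+1, by omega⟩)) = algebraMap F _ q * Xel ⟨m+1, by omega⟩ := by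
        rw [PX]; exact PX0
      exact this
    · exact (map_ne_zero_iff _ (FaithfulSMul.algebraMap_injective F _)).2 hq
    · exact AlgHom.commutes _ _
    · exact AlgHom.commutes _ _
    · intro p
      simp only [AlgHom.toRingHom_eq_coe, RingHom.coe_coe, hφ, hP, AlgHom.comp_apply]
      rw [← Module.End.mul_apply, ← Module.End.mul_apply, ← Module.End.mul_apply,
        ← Module.End.mul_apply]
      congr 1
      refine lin_ext fun a c => ?_
      have h0' : (⟨0, by omega⟩ : Fin (m+2)) = 0 := rfl
      have hr1 := hrot 0 (by omega)
      have hfr : ∀ b : Fin (m+2) →₀ ℤ,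
          Finsupp.equivMapDomain (finRotate (m+2)).symm b 0 = b ⟨0+1, by omega⟩ := by
        intro b
        rw [Finsupp.equivMapDomain_apply, Equiv.symm_symm]
        congr 1
      simp only [Module.End.mul_apply]
      rw [hW, hpiInv, hpiInv, map_smul, map_smul, hpiInv, hpiInv, map_smul, map_smul, hW, hfr, hfr,
        emd_trans, emd_trans, emd_trans, emd_trans]
      rw [mul_assoc, Equiv.mul_swap_eq_swap_mul, ← mul_assoc, Equiv.mul_swap_eq_swap_mul, h0', hr1,
        hrot0, h0', hrot0, hrot, mul_assoc]
      simp only [Finsupp.equivMapDomain_apply, Equiv.symm_swap, Equiv.swap_apply_left,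
        Equiv.swap_apply_right]
      rw [smul_comm]
    · exact hdne _ _ _ _ (by omega)
  -- commutation with `X`
  have hTX : ∀ (k : ℕ), k + 1 < n → T k * XOp k = XOp (k+1) * Ti k := by
    intro k hk
    refine LinearMap.ext fun p => ?_
    rw [hTi, Module.End.mul_apply, Module.End.mul_apply, XOp_apply k (by omega), XOp_apply (k+1) hk,
      Tx_core (φ (Equiv.swap ⟨k, by omega⟩ ⟨k+1, by omega⟩)).toRingHom (Xel ⟨k, by omega⟩)
        (Xel ⟨k+1, by omega⟩) t u (by simp [φX]) (hdne _ _ _ _ (by omega)) (T k) (hT' k hk) p,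
      LinearMap.add_apply, LinearMap.smul_apply, Module.End.one_apply, Algebra.smul_def, map_sub]
  have hTXfar : ∀ (k j : ℕ), k + 1 < j → j < n → T k * XOp j = XOp j * T k := by
    intro k j hk hj
    refine LinearMap.ext fun p => ?_
    rw [Module.End.mul_apply, Module.End.mul_apply, XOp_apply j hj, XOp_apply j hj]
    refine Tfarx_core (φ (Equiv.swap ⟨k, by omega⟩ ⟨k+1, by omega⟩)).toRingHom (Xel ⟨k, by omega⟩)
        (Xel ⟨k+1, by omega⟩) (Xel ⟨j, hj⟩) t u ?_ (hdne _ _ _ _ (by omega)) (T k)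
        (hT' k (by omega)) p
    have n1 : (⟨j, by omega⟩ : Fin n) ≠ ⟨k, by omega⟩ := by simp [Fin.ext_iff]; omega
    have n2 : (⟨j, by omega⟩ : Fin n) ≠ ⟨k+1, by omega⟩ := by simp [Fin.ext_iff]; omega
    simp [φX, Equiv.swap_apply_of_ne_of_ne n1 n2]
  have hPXop : ∀ (k : ℕ), k + 1 < n → piInv * XOp (k+1) = XOp k * piInv := by
    intro k hk
    refine LinearMap.ext fun p => ?_
    rw [Module.End.mul_apply, Module.End.mul_apply, XOp_apply k (by omega), XOp_apply (k+1) hk,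
      ← hP, ← hP, map_mul, PX]
  have hcTi : ∀ i (x : Module.End F (Laur F n)), Commute x (T i) → Commute x (Ti i) := by
    intro i x h
    rw [hTi]
    exact h.add_right ((Commute.one_right x).smul_right _)
  have hPTi : ∀ k, k + 2 < n → Ti k * piInv = piInv * Ti (k+1) := by
    intro k hk
    rw [hTi, hTi, add_mul, mul_add, hPT k hk, smul_mul_assoc, mul_smul_comm, one_mul, mul_one]
  obtain ⟨sh1, sh2⟩ := shift_core (n-1) T Ti (fun k hk => hTinv k (by omega))
    (fun k hk => hbr k (by omega)) (fun i j h1 h2 => hfar i j h1 (by omega))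
    (fun i x _ h => hcTi i x h)
  have hn0 : 0 < n := NeZero.pos n
  obtain ⟨hYy, hyY⟩ := hYinv (n-1) (by omega)
  have hYN : Y (n-1) = piInv * aF Ti 0 (n-1) := by
    rw [hY, Nat.sub_self]; simp [aF]
  have hDN : D (n-1) = (q - q⁻¹)⁻¹ • (XinvOp (n - 1) * (Y (n - 1) - Yi (n - 1))) := by
    rw [hD, Nat.sub_self]; simp [aF, dF]
  have hDrec : ∀ i, i + 1 < n → D i = T i * D (i+1) * T i := by
    intro i hi
    rw [hD i, hD (i+1), show n - 1 - i = (n - 1 - (i+1)) + 1 by omega, aF_succ', dF_succ']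
    simp only [mul_assoc]
  have hTA : ∀ k, k + 2 < n →
      Commute (T k) (XinvOp (n-1) : Module.End F (Laur F n)) := fun k hk =>
    (inv_comm (XX (n-1)).1 (XX (n-1)).2 (hTXfar k (n-1) (by omega) (by omega))).symm
  have hTY : ∀ k, k + 2 < n → Commute (T k) (Y (n-1)) := by
    intro k hk
    show _ = _
    rw [hYN, ← mul_assoc, ← hPT k hk, mul_assoc, sh1 k (n-1) (by omega) le_rfl, mul_assoc]
  have hTy : ∀ k, k + 2 < n → Commute (T k) (Yi (n-1)) := fun k hk =>
    (inv_comm hYy hyY (hTY k hk)).symm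
  have hTD : ∀ k, k + 2 < n → T k * D (n-1) = D (n-1) * T k := by
    intro k hk
    rw [hDN]
    exact ((hTA k hk).mul_right ((hTY k hk).sub_right (hTy k hk))).smul_right _
  have hlast : 2 ≤ n → D (n-2) * D (n-1) = D (n-1) * D (n-2) := by
    intro hn
    obtain ⟨hts, hst⟩ := hTinv (n-2) (by omega)
    have hn1 : n - 2 + 1 = n - 1 := by omega
    have hPPT := hPPT hn
    have hTX := hTX (n-2) (by omega)
    have hPXop := hPXop (n-2) (by omega)
    have hDr := hDrec (n-2) (by omega)
    have sh2 := sh2 (n-2) (by omega)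
    rw [← hn1, aF_succ, zero_add, hn1] at hYN
    rw [hn1] at hTX hPXop hDr
    have hh : T (n-2) = Ti (n-2) + (τ - τ⁻¹) • (1 : Module.End F (Laur F n)) := by
      rw [hTi, add_assoc, ← add_smul]; simp
    have hcP : aF Ti 0 (n-2) * piInv = piInv * aF Ti 1 (n-2) := by
      have : ∀ m, m ≤ n - 2 → aF Ti 0 m * piInv = piInv * aF Ti 1 m := by
        intro m
        induction m with
        | zero => intro _; simp [aF]
        | succ m ih =>
          intro hm
          rw [aF_succ, aF_succ, zero_add, mul_assoc, hPTi m (by omega), ← mul_assoc,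
            ih (by omega), add_comm 1 m, mul_assoc]
      exact this _ le_rfl
    have hcA : Commute (XinvOp (n-1) : Module.End F (Laur F n)) (aF Ti 0 (n-2)) :=
      aF_commute _ _ _ _ fun k _ h2 => hcTi _ _ (hTA k (by omega)).symm
    have hPA : XinvOp (n-2) * piInv = piInv * XinvOp (n-1) :=
      inv_comm (XX (n-1)).1 (XX (n-2)).2 hPXop
    have hB : T (n-2) * XinvOp (n-1) * T (n-2) = XinvOp (n-2) := by
      have h1 : XinvOp (n-1) * T (n-2) = Ti (n-2) * XinvOp (n-2) := by
        calc XinvOp (n-1) * T (n-2) = XinvOp (n-1) * (T (n-2) * XOp (n-2)) * XinvOp (n-2) := by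
              rw [mul_assoc, mul_assoc, (XX (n-2)).1, mul_one]
          _ = (XinvOp (n-1) * XOp (n-1)) * Ti (n-2) * XinvOp (n-2) := by
              rw [hTX]; simp only [mul_assoc]
          _ = _ := by rw [(XX (n-1)).2, one_mul]
      rw [mul_assoc, h1, ← mul_assoc, hts, one_mul]
    have hAB : XinvOp (n-1) * XinvOp (n-2) =
        (XinvOp (n-2) * XinvOp (n-1) : Module.End F (Laur F n)) := by
      have h1 := inv_comm (XX (n-1)).1 (XX (n-1)).2 (XOp_comm (F := F) (n := n) (n-2) (n-1))
      exact (inv_comm (XX (n-2)).1 (XX (n-2)).2 h1).symm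
    generalize aF Ti 0 (n-2) = c at *
    generalize aF Ti 1 (n-2) = c' at *
    generalize (XinvOp (n-2) : Module.End F (Laur F n)) = B at *
    have hYt : Y (n-1) * T (n-2) = piInv * c := by
      rw [hYN, mul_assoc, mul_assoc, hst, mul_one]
    have R1 : T (n-2) * XinvOp (n-1) * T (n-2) * XinvOp (n-1) =
        XinvOp (n-1) * T (n-2) * XinvOp (n-1) * T (n-2) := by
      rw [hB, ← hAB, mul_assoc, mul_assoc, ← mul_assoc (T (n-2)), hB]
    have R3 : T (n-2) * XinvOp (n-1) * T (n-2) * Y (n-1) * T (n-2) =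
        Y (n-1) * T (n-2) * XinvOp (n-1) := by
      rw [hB, mul_assoc, hYt, mul_assoc, ← hcA.eq, ← mul_assoc, ← mul_assoc, hPA]
    have hk : T (n-2) * (piInv * c * (piInv * c)) = piInv * c * (piInv * c) * T (n-2) := by
      have e1 : piInv * c * (piInv * c) = piInv * piInv * (c' * c) := by
        rw [mul_assoc, ← mul_assoc c, hcP]; simp only [mul_assoc]
      rw [e1, ← mul_assoc, ← hPPT, mul_assoc, sh2]; simp only [mul_assoc]
    have R2 : T (n-2) * Y (n-1) * T (n-2) * Y (n-1) = Y (n-1) * T (n-2) * Y (n-1) * T (n-2) := by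
      calc T (n-2) * Y (n-1) * T (n-2) * Y (n-1)
          = T (n-2) * (piInv * c * (piInv * c)) * Ti (n-2) := by
            rw [mul_assoc (T (n-2)), hYt, hYN]; simp only [mul_assoc]
        _ = piInv * c * (piInv * c) := by rw [hk, mul_assoc, hts, mul_one]
        _ = _ := by rw [← hYt]; simp only [mul_assoc]
    have key := rank2_core (XinvOp (n-1)) (Y (n-1)) (Yi (n-1)) (T (n-2)) (Ti (n-2)) (τ - τ⁻¹)
      hts hst hYy hyY hh R1 R2 R3
    rw [hDr, hDN]
    generalize XinvOp (n-1) * (Y (n-1) - Yi (n-1)) = E at *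
    simp only [mul_smul_comm, smul_mul_assoc]
    rw [key]
    simp only [mul_assoc]
  have hDD := chain_core n T D hbr hfar hDrec hTD hlast
  intro i j k l hi hj hk hl _ _
  have h1 := hDD l j hl hj
  have h2 := XOp_comm (F := F) (n := n) k i
  simp only [he, hS]
  constructor
  · have : XOp i * (D l * D j) * XOp k = XOp i * (D j * D l) * XOp k := by rw [h1]
    rw [← sub_eq_zero] at this ⊢
    rw [← neg_eq_zero, ← this]
    simp only [mul_sub, sub_mul, mul_assoc]
    abel
  · have : D j * (XOp k * XOp i) * D l = D j * (XOp i * XOp k) * D l := by rw [h2]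
    rw [← sub_eq_zero] at this ⊢
    rw [← neg_eq_zero, ← this]
    simp only [mul_sub, sub_mul, mul_assoc]
    abel
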